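/- Falik–Samorodnitsky variance bound: Let m be a positive integer, p∈(0,1) with p ≠ 1/2, and let f:{0,1}^m → ℝ be non-constant on the support of P_p (so that var(f) > 0). Then ((1−2p)/log((1−p)/p)) · var(f) · log(var(f)/ℰ₁(f)) ≤ ℰ₂(f), where var(f) is the variance of f under P_p. -/

import Mathlib

/-!
The one-coordinate log-Sobolev inequality, with its sharp constant `L(p, 1 - p)`, expresses the
superadditivity of the logarithmic mean `L(a, b) = (b - a) / (log b - log a)`: if `c` is the
`p`-mean of `y < x`, then `x - c = (1 - p) (x - y)` and `c - y = p (x - y)`, and the inequality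
reads `L(y, c) + L(p, 1 - p) (x - y) ≤ L(c, x)`. Averaging the coordinates out one at a time yields
the log-Sobolev inequality on the cube.

For the variance bound, let `g` be `f` with the coordinates of `s` averaged out. Averaging out a
further coordinate `e` lowers `E[g ^ 2]` by `E[(Δ_e g) ^ 2]` and `ℰ₂(g)` by `ℰ₂(Δ_e g)`. The
log-Sobolev inequality for `Δ_e g` compares the two losses, up to a multiple of
`E[|Δ_e g|] ^ 2 ≤ E[|Δ_e f|] ^ 2`, and summing over all coordinates gives an inequality with a free
parameter `r > 0`; the theorem is the case `r = var(f) / ℰ₁(f)`.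
-/

open scoped Classical

noncomputable section

/-- Weight of a configuration `x ∈ {0,1}^m` under the product Bernoulli(`p`) measure. -/
def cubeWeight (m : ℕ) (p : ℝ) (x : Fin m → Bool) : ℝ :=
  ∏ i : Fin m, if x i then p else 1 - p

/-- Expectation under the product Bernoulli(`p`) measure on `{0,1}^m`. -/
def cubeExp (m : ℕ) (p : ℝ) (f : (Fin m → Bool) → ℝ) : ℝ :=
  ∑ x : Fin m → Bool, cubeWeight m p x * f x

/-- Variance under the product Bernoulli(`p`) measure on `{0,1}^m`. -/
def cubeVar (m : ℕ) (p : ℝ) (f : (Fin m → Bool) → ℝ) : ℝ :=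
  cubeExp m p fun x => (f x - cubeExp m p f) ^ 2

/-- `Δ_e f (x) = f x − (p f(x∪{e}) + (1−p) f(x∖{e}))`. -/
def delta (m : ℕ) (p : ℝ) (f : (Fin m → Bool) → ℝ) (e : Fin m) (x : Fin m → Bool) : ℝ :=
  f x - (p * f (Function.update x e true) + (1 - p) * f (Function.update x e false))

/-- `ℰ₂(f) = Σ_e E_p[|Δ_e f|²]`. -/
def calE₂ (m : ℕ) (p : ℝ) (f : (Fin m → Bool) → ℝ) : ℝ :=
  ∑ e : Fin m, cubeExp m p fun x => |delta m p f e x| ^ 2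

/-- `ℰ₁(f) = Σ_e (E_p[|Δ_e f|])²`. -/
def calE₁ (m : ℕ) (p : ℝ) (f : (Fin m → Bool) → ℝ) : ℝ :=
  ∑ e : Fin m, (cubeExp m p fun x => |delta m p f e x|) ^ 2

/-! ### The logarithmic mean -/

section LogMean

variable {a b c d : ℝ}

/-- The logarithmic mean of `a` and `b`. For positive arguments this integral is
`(b - a) / (log b - log a)` when `a ≠ b`, and `a` when `a = b`. -/
def logMean (a b : ℝ) : ℝ :=
  ∫ t in (0 : ℝ)..1, a ^ (1 - t) * b ^ t

lemma continuous_rpow_one_sub_mul_rpow (ha : 0 < a) (hb : 0 < b) :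
    Continuous fun t : ℝ => a ^ (1 - t) * b ^ t :=
  (continuous_const.rpow (by fun_prop) fun _ => .inl ha.ne').mul
    (continuous_const.rpow continuous_id fun _ => .inl hb.ne')

lemma logMean_pos (ha : 0 < a) (hb : 0 < b) : 0 < logMean a b :=
  intervalIntegral.intervalIntegral_pos_of_pos
    ((continuous_rpow_one_sub_mul_rpow ha hb).intervalIntegrable 0 1)
    (fun _ => by positivity) one_pos

lemma logMean_comm (a b : ℝ) : logMean a b = logMean b a := by
  simpa [logMean, mul_comm] using
    (intervalIntegral.integral_comp_sub_left (fun t : ℝ => a ^ (1 - t) * b ^ t) 1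
      (a := 0) (b := 1)).symm

lemma logMean_mul_mul (hc : 0 < c) (ha : 0 ≤ a) (hb : 0 ≤ b) :
    logMean (c * a) (c * b) = c * logMean a b := by
  rw [logMean, logMean, ← intervalIntegral.integral_const_mul]
  congr 1 with t
  have hct : c ^ (1 - t) * c ^ t = c := by
    rw [← Real.rpow_add hc, sub_add_cancel, Real.rpow_one]
  rw [Real.mul_rpow hc.le ha, Real.mul_rpow hc.le hb]
  linear_combination (a ^ (1 - t) * b ^ t) * hct

lemma hasDerivAt_rpow_one_sub_mul_rpow (ha : 0 < a) (hb : 0 < b) (t : ℝ) :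
    HasDerivAt (fun t : ℝ => a ^ (1 - t) * b ^ t)
      (a ^ (1 - t) * b ^ t * (Real.log b - Real.log a)) t := by
  have hleft := ((hasDerivAt_id t).const_sub 1).const_rpow ha
  have hright := (hasDerivAt_id t).const_rpow hb
  refine (hleft.mul hright).congr_deriv ?_
  simp only [id]
  ring

lemma logMean_mul_log_sub_log (ha : 0 < a) (hb : 0 < b) :
    logMean a b * (Real.log b - Real.log a) = b - a := by
  rw [logMean, ← intervalIntegral.integral_mul_const,
    intervalIntegral.integral_eq_sub_of_hasDerivAt
      (fun t _ => hasDerivAt_rpow_one_sub_mul_rpow ha hb t)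
      (((continuous_rpow_one_sub_mul_rpow ha hb).mul_const _).intervalIntegrable 0 1)]
  simp

lemma logMean_eq_div (ha : 0 < a) (hb : 0 < b) (hab : a ≠ b) :
    logMean a b = (b - a) / (Real.log b - Real.log a) := by
  have hlog : Real.log b - Real.log a ≠ 0 :=
    sub_ne_zero.2 fun h => hab (Real.log_injOn_pos ha hb h.symm)
  rw [eq_div_iff hlog, logMean_mul_log_sub_log ha hb]

lemma logMean_one_sub_eq_div {p : ℝ} (hp : p ∈ Set.Ioo (0 : ℝ) 1) (hp' : p ≠ 1 / 2) :
    logMean p (1 - p) = (1 - 2 * p) / Real.log ((1 - p) / p) := by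
  have hne : p ≠ 1 - p := fun h => hp' (by linarith)
  rw [logMean_eq_div hp.1 (sub_pos.2 hp.2) hne, Real.log_div (sub_pos.2 hp.2).ne' hp.1.ne']
  ring

lemma rpow_one_sub_mul_rpow_add_le (ha : 0 < a) (hb : 0 < b) (hc : 0 < c) (hd : 0 < d)
    {t : ℝ} (ht : t ∈ Set.Icc (0 : ℝ) 1) :
    a ^ (1 - t) * b ^ t + c ^ (1 - t) * d ^ t ≤ (a + c) ^ (1 - t) * (b + d) ^ t := by
  have amgm {x y : ℝ} (hx : 0 < x) (hy : 0 < y) :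
      x ^ (1 - t) * y ^ t ≤ ((1 - t) * (x / (a + c)) + t * (y / (b + d))) *
        ((a + c) ^ (1 - t) * (b + d) ^ t) := by
    have h := Real.geom_mean_le_arith_mean2_weighted (sub_nonneg.2 ht.2) ht.1
      (div_pos hx (add_pos ha hc)).le (div_pos hy (add_pos hb hd)).le (sub_add_cancel 1 t)
    rwa [Real.div_rpow hx.le (by positivity), Real.div_rpow hy.le (by positivity),
      div_mul_div_comm, div_le_iff₀ (by positivity)] at h
  calc a ^ (1 - t) * b ^ t + c ^ (1 - t) * d ^ t
      ≤ _ := add_le_add (amgm ha hb) (amgm hc hd)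
    _ = (a + c) ^ (1 - t) * (b + d) ^ t := by
      field_simp
      ring

lemma logMean_add_le (ha : 0 < a) (hb : 0 < b) (hc : 0 < c) (hd : 0 < d) :
    logMean a b + logMean c d ≤ logMean (a + c) (b + d) := by
  have integrable {x y : ℝ} (hx : 0 < x) (hy : 0 < y) :=
    (continuous_rpow_one_sub_mul_rpow hx hy).intervalIntegrable (μ := MeasureTheory.volume) 0 1
  rw [logMean, logMean, ← intervalIntegral.integral_add (integrable ha hb) (integrable hc hd)]
  exact intervalIntegral.integral_mono_on zero_le_one
    ((integrable ha hb).add (integrable hc hd)) (integrable (add_pos ha hc) (add_pos hb hd))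
    fun t ht => rpow_one_sub_mul_rpow_add_le ha hb hc hd ht

end LogMean

/-! ### The two-point inequality -/

section TwoPoint

variable {p q x y : ℝ}

lemma logMean_mul_log_mul_log_le (hp : 0 < p) (hq : 0 < q) (hpq : p + q = 1)
    (hy : 0 < y) (hyx : y < x) :
    let c := p * x + q * y
    (Real.log x - Real.log c) * (logMean p q * (Real.log c - Real.log y) + p) ≤
      q * (Real.log c - Real.log y) := by
  intro c
  have hx : 0 < x := hy.trans hyx
  have hc : 0 < c := by positivity
  have hxy : 0 < x - y := sub_pos.2 hyx
  have hcy : c - y = p * (x - y) := by linear_combination y * hpq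
  have hxc : x - c = q * (x - y) := by linear_combination -x * hpq
  have hX : 0 < Real.log x - Real.log c :=
    sub_pos.2 (Real.log_lt_log hc (sub_pos.1 (hxc ▸ mul_pos hq hxy)))
  have hY : 0 < Real.log c - Real.log y :=
    sub_pos.2 (Real.log_lt_log hy (sub_pos.1 (hcy ▸ mul_pos hp hxy)))
  have superadditive : logMean y c + (x - y) * logMean p q ≤ logMean c x := by
    calc logMean y c + (x - y) * logMean p q
        = logMean y c + logMean ((x - y) * p) ((x - y) * q) := by
          rw [logMean_mul_mul hxy hp.le hq.le]
      _ ≤ logMean (y + (x - y) * p) (c + (x - y) * q) :=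
          logMean_add_le hy hc (mul_pos hxy hp) (mul_pos hxy hq)
      _ = logMean c x := by congr 1 <;> linarith
  have hLX := (logMean_mul_log_sub_log hc hx).trans hxc
  have hLY := (logMean_mul_log_sub_log hy hc).trans hcy
  refine le_of_mul_le_mul_left ?_ hxy
  linear_combination (mul_le_mul_of_nonneg_right superadditive (mul_pos hX hY).le) +
    (Real.log c - Real.log y) * hLX - (Real.log x - Real.log c) * hLY

lemma mul_sq_le_mul_sq_add_mul_sub_sq {α β γ : ℝ} (hpos : 0 < β + γ)
    (hα : α * (β + γ) ≤ β * γ) (a b : ℝ) : α * a ^ 2 ≤ β * b ^ 2 + γ * (a - b) ^ 2 := by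
  refine le_of_mul_le_mul_right ?_ hpos
  calc α * a ^ 2 * (β + γ) = α * (β + γ) * a ^ 2 := by ring
    _ ≤ β * γ * a ^ 2 := by gcongr
    _ ≤ β * γ * a ^ 2 + (β * b - γ * (a - b)) ^ 2 := le_add_of_nonneg_right (sq_nonneg _)
    _ = (β * b ^ 2 + γ * (a - b) ^ 2) * (β + γ) := by ring

lemma two_point_log_sobolev_of_lt (hp : 0 < p) (hq : 0 < q) (hpq : p + q = 1)
    (hy : 0 < y) (hyx : y < x) (a b : ℝ) :
    let c := p * x + q * y
    logMean p q * (p * (a ^ 2 * (Real.log x - Real.log c)) +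
      q * (b ^ 2 * (Real.log y - Real.log c))) ≤ p * q * (a - b) ^ 2 := by
  intro c
  have hL := logMean_pos hp hq
  have hlog := logMean_mul_log_mul_log_le hp hq hpq hy hyx
  have hc : y ≤ c := by
    have : c - y = p * (x - y) := by linear_combination y * hpq
    nlinarith [mul_pos hp (sub_pos.2 hyx)]
  have hY : 0 ≤ Real.log c - Real.log y := sub_nonneg.2 (Real.log_le_log hy hc)
  have h := mul_sq_le_mul_sq_add_mul_sub_sq
    (α := logMean p q * p * (Real.log x - Real.log c))
    (β := logMean p q * q * (Real.log c - Real.log y)) (γ := p * q) (by positivity)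
    (by linear_combination (logMean p q * p * q) * hlog) a b
  linear_combination h

lemma two_point_log_sobolev (hp : 0 < p) (hq : 0 < q) (hpq : p + q = 1)
    (hx : 0 < x) (hy : 0 < y) (a b : ℝ) :
    let c := p * x + q * y
    logMean p q * (p * (a ^ 2 * (Real.log x - Real.log c)) +
      q * (b ^ 2 * (Real.log y - Real.log c))) ≤ p * q * (a - b) ^ 2 := by
  intro c
  rcases lt_trichotomy y x with hyx | rfl | hxy
  · exact two_point_log_sobolev_of_lt hp hq hpq hy hyx a b
  · have hc : c = y := by linear_combination y * hpq
    simp only [hc, sub_self, mul_zero, add_zero]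
    positivity
  · have h := two_point_log_sobolev_of_lt hq hp (by rwa [add_comm]) hx hxy b a
    simp only [logMean_comm q p, add_comm (q * y)] at h
    linear_combination h

end TwoPoint

/-! ### Expectation and averaging on the cube -/

section Averaging

variable {m : ℕ} {p : ℝ}

lemma cubeExp_add (f g : (Fin m → Bool) → ℝ) :
    cubeExp m p (fun x => f x + g x) = cubeExp m p f + cubeExp m p g := by
  simp only [cubeExp, mul_add, Finset.sum_add_distrib]

lemma cubeExp_const_mul (c : ℝ) (f : (Fin m → Bool) → ℝ) :
    cubeExp m p (fun x => c * f x) = c * cubeExp m p f := by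
  simp only [cubeExp, Finset.mul_sum, mul_left_comm]

lemma cubeExp_sub (f g : (Fin m → Bool) → ℝ) :
    cubeExp m p (fun x => f x - g x) = cubeExp m p f - cubeExp m p g := by
  simp only [cubeExp, mul_sub, Finset.sum_sub_distrib]

lemma sum_cubeWeight (m : ℕ) (p : ℝ) : ∑ x, cubeWeight m p x = 1 := by
  simp only [cubeWeight]
  rw [← Fintype.prod_sum fun (_ : Fin m) (b : Bool) => if b then p else 1 - p]
  simp

@[simp]
lemma cubeExp_const (c : ℝ) : cubeExp m p (fun _ => c) = c := by
  rw [cubeExp, ← Finset.sum_mul, sum_cubeWeight, one_mul]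

lemma cubeWeight_nonneg (hp : p ∈ Set.Icc (0 : ℝ) 1) (x : Fin m → Bool) :
    0 ≤ cubeWeight m p x :=
  Finset.prod_nonneg fun _ _ => by split_ifs <;> linarith [hp.1, hp.2]

lemma cubeWeight_pos (hp : p ∈ Set.Ioo (0 : ℝ) 1) (x : Fin m → Bool) : 0 < cubeWeight m p x :=
  Finset.prod_pos fun _ _ => by split_ifs <;> linarith [hp.1, hp.2]

lemma cubeExp_mono (hp : p ∈ Set.Icc (0 : ℝ) 1) {f g : (Fin m → Bool) → ℝ}
    (hfg : ∀ x, f x ≤ g x) : cubeExp m p f ≤ cubeExp m p g :=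
  Finset.sum_le_sum fun x _ => mul_le_mul_of_nonneg_left (hfg x) (cubeWeight_nonneg hp x)

lemma cubeExp_nonneg (hp : p ∈ Set.Icc (0 : ℝ) 1) {f : (Fin m → Bool) → ℝ}
    (hf : ∀ x, 0 ≤ f x) : 0 ≤ cubeExp m p f :=
  Finset.sum_nonneg fun x _ => mul_nonneg (cubeWeight_nonneg hp x) (hf x)

lemma cubeExp_pos (hp : p ∈ Set.Ioo (0 : ℝ) 1) {f : (Fin m → Bool) → ℝ}
    (hf : ∀ x, 0 < f x) : 0 < cubeExp m p f :=
  Finset.sum_pos (fun x _ => mul_pos (cubeWeight_pos hp x) (hf x)) Finset.univ_nonempty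

lemma cubeVar_eq (p : ℝ) (f : (Fin m → Bool) → ℝ) :
    cubeVar m p f = cubeExp m p (fun x => f x ^ 2) - cubeExp m p f ^ 2 := by
  have expand (x : Fin m → Bool) : (f x - cubeExp m p f) ^ 2 =
      f x ^ 2 - 2 * cubeExp m p f * f x + cubeExp m p f ^ 2 := by ring
  simp only [cubeVar, expand, cubeExp_add, cubeExp_sub, cubeExp_const_mul, cubeExp_const]
  ring

/-- The average of `f` over coordinate `e`, the other coordinates being kept. -/
def coordAvg (p : ℝ) (e : Fin m) (f : (Fin m → Bool) → ℝ) (x : Fin m → Bool) : ℝ :=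
  p * f (Function.update x e true) + (1 - p) * f (Function.update x e false)

lemma delta_eq_sub_coordAvg (f : (Fin m → Bool) → ℝ) (e : Fin m) :
    delta m p f e = fun x => f x - coordAvg p e f x := rfl

lemma coordAvg_update (e : Fin m) (f : (Fin m → Bool) → ℝ) (x : Fin m → Bool) (b : Bool) :
    coordAvg p e f (Function.update x e b) = coordAvg p e f x := by
  simp only [coordAvg, Function.update_idem]

lemma coordAvg_comm (e i : Fin m) (f : (Fin m → Bool) → ℝ) :
    coordAvg p e (coordAvg p i f) = coordAvg p i (coordAvg p e f) := by
  rcases eq_or_ne e i with rfl | hne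
  · rfl
  · funext x
    simp only [coordAvg, Function.update_comm hne]
    ring

lemma coordAvg_sub (e : Fin m) (f g : (Fin m → Bool) → ℝ) :
    coordAvg p e (fun x => f x - g x) = fun x => coordAvg p e f x - coordAvg p e g x := by
  funext x
  simp only [coordAvg]
  ring

lemma delta_coordAvg (e i : Fin m) (f : (Fin m → Bool) → ℝ) :
    delta m p (coordAvg p e f) i = coordAvg p e (delta m p f i) := by
  simp only [delta_eq_sub_coordAvg, coordAvg_sub, coordAvg_comm i e]

lemma delta_comm (e i : Fin m) (f : (Fin m → Bool) → ℝ) :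
    delta m p (delta m p f e) i = delta m p (delta m p f i) e := by
  funext x
  simp only [delta_eq_sub_coordAvg, coordAvg_sub, coordAvg_comm i e]
  ring

lemma cubeWeight_update_mul (e : Fin m) (x : Fin m → Bool) (b : Bool) :
    cubeWeight m p (Function.update x e b) * (if x e then p else 1 - p) =
      cubeWeight m p x * (if b then p else 1 - p) := by
  have hrest : ∏ i ∈ Finset.univ.erase e, (if Function.update x e b i then p else 1 - p) =
      ∏ i ∈ Finset.univ.erase e, (if x i then p else 1 - p) :=
    Finset.prod_congr rfl fun i hi => by rw [Function.update_of_ne (Finset.ne_of_mem_erase hi)]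
  simp only [cubeWeight]
  rw [← Finset.mul_prod_erase _ _ (Finset.mem_univ e), hrest, Function.update_self,
    ← Finset.mul_prod_erase Finset.univ (fun i => if x i then p else 1 - p) (Finset.mem_univ e)]
  ring

-- Resampling coordinate `e` is reversible: exchanging `x e` with the fresh value `b` preserves
-- the joint law of `(x, b)`.
lemma cubeExp_coordAvg (e : Fin m) (f : (Fin m → Bool) → ℝ) :
    cubeExp m p (coordAvg p e f) = cubeExp m p f := by
  let bit (b : Bool) : ℝ := if b then p else 1 - p
  have swap_involutive : Function.Involutive fun z : (Fin m → Bool) × Bool =>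
      (Function.update z.1 e z.2, z.1 e) := fun z => by simp
  calc cubeExp m p (coordAvg p e f)
      = ∑ z : (Fin m → Bool) × Bool,
          cubeWeight m p z.1 * bit z.2 * f (Function.update z.1 e z.2) := by
        simp [cubeExp, coordAvg, Fintype.sum_prod_type, bit, mul_add, mul_assoc]
    _ = ∑ z : (Fin m → Bool) × Bool, cubeWeight m p z.1 * bit z.2 * f z.1 :=
        Fintype.sum_equiv swap_involutive.toPerm _ _ fun z => by
          simp only [Function.Involutive.coe_toPerm, bit, cubeWeight_update_mul]
    _ = cubeExp m p f := by
        simp only [cubeExp, Fintype.sum_prod_type, Fintype.sum_bool, bit]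
        refine Finset.sum_congr rfl fun x _ => ?_
        simp only [if_true, Bool.false_eq_true, if_false]
        ring

lemma cubeExp_abs_coordAvg_le (hp : p ∈ Set.Icc (0 : ℝ) 1) (e : Fin m)
    (f : (Fin m → Bool) → ℝ) :
    cubeExp m p (fun x => |coordAvg p e f x|) ≤ cubeExp m p (fun x => |f x|) := by
  rw [← cubeExp_coordAvg e fun x => |f x|]
  refine cubeExp_mono hp fun x => (abs_add_le _ _).trans_eq ?_
  rw [abs_mul, abs_mul, abs_of_nonneg hp.1, abs_of_nonneg (sub_nonneg.2 hp.2), coordAvg]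

lemma cubeExp_delta_sq (e : Fin m) (f : (Fin m → Bool) → ℝ) :
    cubeExp m p (fun x => delta m p f e x ^ 2) =
      cubeExp m p (fun x => f x ^ 2) - cubeExp m p (fun x => coordAvg p e f x ^ 2) := by
  have orthogonal : cubeExp m p (fun x => f x * coordAvg p e f x) =
      cubeExp m p (fun x => coordAvg p e f x ^ 2) := by
    rw [← cubeExp_coordAvg e fun x => f x * coordAvg p e f x]
    congr 1 with x
    rw [coordAvg, coordAvg_update, coordAvg_update, coordAvg]
    ring
  have expand (x : Fin m → Bool) : delta m p f e x ^ 2 =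
      f x ^ 2 - 2 * (f x * coordAvg p e f x) + coordAvg p e f x ^ 2 := by
    rw [delta_eq_sub_coordAvg]
    ring
  simp only [expand, cubeExp_add, cubeExp_sub, cubeExp_const_mul, orthogonal]
  ring

/-- The conditional expectation of `f` given the coordinates outside `s`, written as the
expectation over an independent copy `y` of the coordinates in `s`. -/
def condAvg (p : ℝ) (s : Finset (Fin m)) (f : (Fin m → Bool) → ℝ) (x : Fin m → Bool) : ℝ :=
  cubeExp m p fun y => f (s.piecewise y x)

lemma condAvg_empty (f : (Fin m → Bool) → ℝ) : condAvg p ∅ f = f := by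
  funext x
  simp only [condAvg, Finset.piecewise_empty, cubeExp_const]

lemma condAvg_univ (f : (Fin m → Bool) → ℝ) :
    condAvg p Finset.univ f = fun _ => cubeExp m p f := by
  funext x
  simp only [condAvg, Finset.piecewise_univ]

lemma condAvg_insert {s : Finset (Fin m)} {e : Fin m} (he : e ∉ s) (f : (Fin m → Bool) → ℝ) :
    condAvg p (insert e s) f = coordAvg p e (condAvg p s f) := by
  funext x
  have update_resampled (y : Fin m → Bool) (b : Bool) :
      Function.update (s.piecewise (Function.update y e b) x) e b =
        s.piecewise y (Function.update x e b) := by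
    rw [Finset.update_piecewise, Function.update_idem, ← Finset.update_piecewise,
      Finset.update_piecewise_of_notMem _ _ _ he]
  simp only [condAvg, Finset.piecewise_insert]
  rw [← cubeExp_coordAvg e]
  unfold coordAvg
  simp only [Function.update_self, update_resampled, cubeExp_add, cubeExp_const_mul, condAvg]

lemma condAvg_pos (hp : p ∈ Set.Ioo (0 : ℝ) 1) {f : (Fin m → Bool) → ℝ} (hf : ∀ x, 0 < f x)
    (s : Finset (Fin m)) (x : Fin m → Bool) : 0 < condAvg p s f x :=
  cubeExp_pos hp fun _ => hf _

lemma cubeExp_abs_delta_condAvg_le (hp : p ∈ Set.Icc (0 : ℝ) 1) (s : Finset (Fin m))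
    (f : (Fin m → Bool) → ℝ) (e : Fin m) :
    cubeExp m p (fun x => |delta m p (condAvg p s f) e x|) ≤
      cubeExp m p (fun x => |delta m p f e x|) := by
  induction s using Finset.induction_on with
  | empty => rw [condAvg_empty]
  | insert i s hi ih =>
    rw [condAvg_insert hi, delta_coordAvg]
    exact (cubeExp_abs_coordAvg_le hp i _).trans ih

lemma calE₂_nonneg (hp : p ∈ Set.Icc (0 : ℝ) 1) (f : (Fin m → Bool) → ℝ) : 0 ≤ calE₂ m p f :=
  Finset.sum_nonneg fun _ _ => cubeExp_nonneg hp fun _ => sq_nonneg _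

lemma calE₂_delta (e : Fin m) (f : (Fin m → Bool) → ℝ) :
    calE₂ m p (delta m p f e) = calE₂ m p f - calE₂ m p (coordAvg p e f) := by
  simp only [calE₂, sq_abs, delta_comm e, cubeExp_delta_sq e, delta_coordAvg,
    Finset.sum_sub_distrib]

end Averaging

/-! ### The log-Sobolev inequality on the cube -/

section LogSobolev

variable {m : ℕ} {p : ℝ}

lemma coord_log_sobolev (hp : p ∈ Set.Ioo (0 : ℝ) 1) (e : Fin m) (f : (Fin m → Bool) → ℝ)
    {g : (Fin m → Bool) → ℝ} (hg : ∀ x, 0 < g x) :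
    logMean p (1 - p) *
        cubeExp m p (fun x => f x ^ 2 * (Real.log (g x) - Real.log (coordAvg p e g x))) ≤
      cubeExp m p (fun x => |delta m p f e x| ^ 2) := by
  rw [← cubeExp_coordAvg e fun x => f x ^ 2 * _, ← cubeExp_coordAvg e fun x => |_| ^ 2,
    ← cubeExp_const_mul]
  refine cubeExp_mono (Set.Ioo_subset_Icc_self hp) fun x => ?_
  have htwo := two_point_log_sobolev hp.1 (sub_pos.2 hp.2) (add_sub_cancel p 1)
    (hg (Function.update x e true)) (hg (Function.update x e false))
    (f (Function.update x e true)) (f (Function.update x e false))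
  have hdelta : coordAvg p e (fun x => |delta m p f e x| ^ 2) x =
      p * (1 - p) * (f (Function.update x e true) - f (Function.update x e false)) ^ 2 := by
    simp only [sq_abs, coordAvg, delta, Function.update_idem]
    ring
  rw [hdelta, coordAvg, coordAvg_update, coordAvg_update]
  exact htwo

lemma condAvg_log_sobolev (hp : p ∈ Set.Ioo (0 : ℝ) 1) (s : Finset (Fin m))
    (f : (Fin m → Bool) → ℝ) {g : (Fin m → Bool) → ℝ} (hg : ∀ x, 0 < g x) :
    logMean p (1 - p) *
        cubeExp m p (fun x => f x ^ 2 * (Real.log (g x) - Real.log (condAvg p s g x))) ≤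
      ∑ e ∈ s, cubeExp m p (fun x => |delta m p f e x| ^ 2) := by
  induction s using Finset.induction_on with
  | empty => simp [condAvg_empty]
  | insert e s he ih =>
    have telescope (x : Fin m → Bool) :
        f x ^ 2 * (Real.log (g x) - Real.log (condAvg p (insert e s) g x)) =
          f x ^ 2 * (Real.log (condAvg p s g x) - Real.log (coordAvg p e (condAvg p s g) x)) +
            f x ^ 2 * (Real.log (g x) - Real.log (condAvg p s g x)) := by
      rw [condAvg_insert he]
      ring
    simp only [telescope]
    rw [cubeExp_add, mul_add, Finset.sum_insert he]
    exact add_le_add (coord_log_sobolev hp e f (condAvg_pos hp hg s)) ih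

lemma cube_log_sobolev (hp : p ∈ Set.Ioo (0 : ℝ) 1) (f : (Fin m → Bool) → ℝ)
    {g : (Fin m → Bool) → ℝ} (hg : ∀ x, 0 < g x) :
    logMean p (1 - p) *
        cubeExp m p (fun x => f x ^ 2 * (Real.log (g x) - Real.log (cubeExp m p g))) ≤
      calE₂ m p f := by
  simpa only [condAvg_univ, calE₂] using condAvg_log_sobolev hp Finset.univ f hg

lemma two_mul_sq_mul_one_add_log_sub_le {r : ℝ} (hr : 0 < r) (x : ℝ) :
    2 * (x ^ 2 * (1 + Real.log r) - r * |x|) ≤ x ^ 2 * Real.log (x ^ 2) := by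
  rcases eq_or_ne x 0 with rfl | hx
  · simp
  · have habs : 0 < |x| := abs_pos.2 hx
    have hlog := Real.one_sub_inv_le_log_of_pos (div_pos habs hr)
    rw [Real.log_div habs.ne' hr.ne', inv_div, Real.log_abs] at hlog
    have hscaled := mul_le_mul_of_nonneg_left hlog (sq_nonneg x)
    have hcancel : x ^ 2 * (r / |x|) = r * |x| := by
      rw [← sq_abs]
      field_simp
    rw [Real.log_pow]
    push_cast
    linear_combination 2 * hscaled + 2 * hcancel

lemma sq_mul_log_sq_le_sq_mul_log_sq_add {ε : ℝ} (hε : 0 ≤ ε) (x : ℝ) :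
    x ^ 2 * Real.log (x ^ 2) ≤ x ^ 2 * Real.log (x ^ 2 + ε) := by
  rcases eq_or_ne x 0 with rfl | hx
  · simp
  · gcongr
    exact le_add_of_nonneg_right hε

lemma cubeExp_sq_mul_one_add_log_sub_le (hp : p ∈ Set.Ioo (0 : ℝ) 1) (f : (Fin m → Bool) → ℝ)
    {r : ℝ} (hr : 0 < r) :
    logMean p (1 - p) * (cubeExp m p (fun x => f x ^ 2) * (1 + Real.log r) -
      r * cubeExp m p (fun x => |f x|) ^ 2) ≤ calE₂ m p f := by
  set A := cubeExp m p fun x => f x ^ 2 with hA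
  set B := cubeExp m p fun x => |f x| with hB
  have hA_nonneg : 0 ≤ A := cubeExp_nonneg (Set.Ioo_subset_Icc_self hp) fun x => sq_nonneg _
  have hL := logMean_pos hp.1 (sub_pos.2 hp.2)
  rw [← le_div_iff₀' hL]
  refine le_of_forall_pos_le_add fun ε hε => ?_
  have hr_mul : 0 < r * (A + ε) := by positivity
  -- This choice of `ρ` makes `A * log (A + ε)` cancel below.
  set ρ := √(r * (A + ε)) with hρ
  have hlogρ : 2 * Real.log ρ = Real.log r + Real.log (A + ε) := by
    rw [hρ, Real.log_sqrt hr_mul.le, Real.log_mul hr.ne' (by positivity)]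
    ring
  have hsobolev := cube_log_sobolev hp f (g := fun x => f x ^ 2 + ε) fun x => by positivity
  rw [← le_div_iff₀' hL, cubeExp_add, cubeExp_const, ← hA] at hsobolev
  have hpointwise (x : Fin m → Bool) :
      2 * ((1 + Real.log ρ) * f x ^ 2 - ρ * |f x|) - Real.log (A + ε) * f x ^ 2 ≤
        f x ^ 2 * (Real.log (f x ^ 2 + ε) - Real.log (A + ε)) := by
    linear_combination two_mul_sq_mul_one_add_log_sub_le (Real.sqrt_pos.2 hr_mul) (f x) +
      sq_mul_log_sq_le_sq_mul_log_sq_add hε.le (f x)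
  have hexp := (cubeExp_mono (Set.Ioo_subset_Icc_self hp) hpointwise).trans hsobolev
  simp only [cubeExp_sub, cubeExp_const_mul, ← hA, ← hB] at hexp
  have hamgm : 2 * ρ * B ≤ A + ε + r * B ^ 2 := by
    have hsq : ρ ^ 2 = r * (A + ε) := Real.sq_sqrt hr_mul.le
    refine le_of_mul_le_mul_left ?_ hr
    linear_combination sq_nonneg (ρ - r * B) + hsq
  linear_combination hexp + hamgm - A * hlogρ

end LogSobolev

/-! ### The variance bound -/

section VarianceBound

variable {m : ℕ} {p : ℝ}

lemma condAvg_variance_bound (hp : p ∈ Set.Ioo (0 : ℝ) 1) (f : (Fin m → Bool) → ℝ)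
    {r : ℝ} (hr : 0 < r) (s : Finset (Fin m)) :
    logMean p (1 - p) *
        ((cubeExp m p (fun x => f x ^ 2) - cubeExp m p (fun x => condAvg p s f x ^ 2)) *
            (1 + Real.log r) -
          r * ∑ e ∈ s, cubeExp m p (fun x => |delta m p f e x|) ^ 2) ≤
      calE₂ m p f - calE₂ m p (condAvg p s f) := by
  have hpIcc := Set.Ioo_subset_Icc_self hp
  induction s using Finset.induction_on with
  | empty => simp [condAvg_empty]
  | insert e s he ih =>
    have hstep := cubeExp_sq_mul_one_add_log_sub_le hp (delta m p (condAvg p s f) e) hr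
    rw [cubeExp_delta_sq, calE₂_delta] at hstep
    have hcontract : cubeExp m p (fun x => |delta m p (condAvg p s f) e x|) ^ 2 ≤
        cubeExp m p (fun x => |delta m p f e x|) ^ 2 :=
      pow_le_pow_left₀ (cubeExp_nonneg hpIcc fun _ => abs_nonneg _)
        (cubeExp_abs_delta_condAvg_le hpIcc s f e) 2
    have hL := logMean_pos hp.1 (sub_pos.2 hp.2)
    rw [condAvg_insert he, Finset.sum_insert he]
    linear_combination ih + hstep + (logMean p (1 - p) * r) * hcontract

lemma cubeVar_mul_one_add_log_sub_le (hp : p ∈ Set.Ioo (0 : ℝ) 1) (f : (Fin m → Bool) → ℝ)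
    {r : ℝ} (hr : 0 < r) :
    logMean p (1 - p) * (cubeVar m p f * (1 + Real.log r) - r * calE₁ m p f) ≤ calE₂ m p f := by
  have h := condAvg_variance_bound hp f hr Finset.univ
  rw [condAvg_univ, cubeExp_const, ← cubeVar_eq] at h
  exact h.trans (sub_le_self _ (calE₂_nonneg (Set.Ioo_subset_Icc_self hp) _))

lemma calE₁_pos (hp : p ∈ Set.Ioo (0 : ℝ) 1) {f : (Fin m → Bool) → ℝ}
    (hf : 0 < cubeVar m p f) : 0 < calE₁ m p f := by
  have hE₁_nonneg : 0 ≤ calE₁ m p f := Finset.sum_nonneg fun _ _ => sq_nonneg _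
  refine hE₁_nonneg.lt_of_ne' fun hE₁ => ?_
  have hLV : 0 < logMean p (1 - p) * cubeVar m p f :=
    mul_pos (logMean_pos hp.1 (sub_pos.2 hp.2)) hf
  have h := cubeVar_mul_one_add_log_sub_le hp f
    (Real.exp_pos (calE₂ m p f / (logMean p (1 - p) * cubeVar m p f)))
  rw [hE₁, mul_zero, sub_zero, Real.log_exp, ← mul_assoc, mul_add, mul_one,
    mul_div_cancel₀ _ hLV.ne'] at h
  linarith

theorem falik_samorodnitsky_general (m : ℕ) (p : ℝ) (hp : p ∈ Set.Ioo (0 : ℝ) 1)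
    (f : (Fin m → Bool) → ℝ) (hf : 0 < cubeVar m p f) :
    logMean p (1 - p) * cubeVar m p f * Real.log (cubeVar m p f / calE₁ m p f) ≤
      calE₂ m p f := by
  have hE₁ := calE₁_pos hp hf
  have h := cubeVar_mul_one_add_log_sub_le hp f (div_pos hf hE₁)
  rw [div_mul_cancel₀ _ hE₁.ne'] at h
  linear_combination h

end VarianceBound

/-- **Falik–Samorodnitsky variance bound:**
`((1−2p)/log((1−p)/p)) · var(f) · log(var(f)/ℰ₁(f)) ≤ ℰ₂(f)`. -/
theorem falik_samorodnitsky (m : ℕ) (hm : 0 < m) (p : ℝ)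
    (hp : p ∈ Set.Ioo (0 : ℝ) 1) (hp' : p ≠ 1 / 2)
    (f : (Fin m → Bool) → ℝ) (hf : 0 < cubeVar m p f) :
    (1 - 2 * p) / Real.log ((1 - p) / p) * cubeVar m p f *
        Real.log (cubeVar m p f / calE₁ m p f) ≤ calE₂ m p f := by
  rw [← logMean_one_sub_eq_div hp hp']
  exact falik_samorodnitsky_general m p hp f hf

end
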